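/- Let p, q be real numbers and let k be a positive integer such that V_k(p,q)² − 4q^k ≠ 0. Then for every n ≥ 3, s_4(n; p,q; k) = (U_k(p,q)³/(6·(V_k(p,q)² − 4q^k)³)) · (V_k(p,q)³·(n−1)(n−2)(n−3)·U_{n·k}(p,q) − 6q^k·V_k(p,q)²·(n−2)(n−3)(n+1)·U_{(n−1)·k}(p,q) + 12q^(2k)·V_k(p,q)·(n−3)(n²+n−1)·U_{(n−2)·k}(p,q) − 8q^(3k)·n(n²−4)·U_{(n−3)·k}(p,q)). -/

import Mathlib

/-- The generalized Fibonacci sequence: `U 0 = 0`, `U 1 = 1`,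
`U (n+2) = p * U (n+1) - q * U n`. -/
def genU (p q : ℝ) : ℕ → ℝ
  | 0 => 0
  | 1 => 1
  | (n + 2) => p * genU p q (n + 1) - q * genU p q n

/-- The generalized Lucas sequence: `V 0 = 2`, `V 1 = p`,
`V (n+2) = p * V (n+1) - q * V n`. -/
def genV (p q : ℝ) : ℕ → ℝ
  | 0 => 2
  | 1 => p
  | (n + 2) => p * genV p q (n + 1) - q * genV p q n

/-- `s_d(n; p, q; k) = ∑_{j₁ + ⋯ + j_d = n} ∏_{i=1}^{d} U_{k jᵢ}(p, q)`,
the sum being over `d`-tuples of nonnegative integers. -/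
def sgen (p q : ℝ) (k d n : ℕ) : ℝ :=
  ∑ t ∈ Finset.Nat.antidiagonalTuple d n, ∏ i, genU p q (k * t i)

/-!
With `u = U_k`, `a = V_k`, `b = q ^ k`, the numbers `U_{kn}` satisfy the recurrence
`x_{n+2} = a x_{n+1} - b x_n`, so their generating function `G` satisfies
`(1 - a X + b X²) G = u X`, and `s_d(n)` is the `n`-th coefficient of `G ^ d`. Since the
denominator is quadratic with discriminant `Δ = a² - 4 b`, the series `Δ G²` is a combination of `G`
and `X G'` with polynomial coefficients. Multiplying by `d G ^ (d - 1)` expresses `d Δ G ^ (d + 1)`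
through `G ^ d` and its derivative, which on coefficients reads
`d Δ s_{d+1}(n+1) = u (a (n + 1 - d) s_d(n+1) - 2 b (n + d) s_d(n))`.
Applying this for `d = 3, 2, 1` gives the closed form for `s_4`.
-/

open PowerSeries

section CommSemiring

variable {R : Type*} [CommSemiring R]

theorem sum_antidiagonalTuple_prod_coeff (F : R⟦X⟧) (d n : ℕ) :
    ∑ t ∈ Finset.Nat.antidiagonalTuple d n, ∏ i, coeff (t i) F = coeff n (F ^ d) := by
  rw [← Fin.prod_const, coeff_prod, ← Finset.piAntidiag_univ_fin_eq_antidiagonalTuple]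
  refine Finset.sum_bij' (fun t _ ↦ Finsupp.equivFunOnFinite.symm t) (fun t _ ↦ ⇑t) ?_ ?_ ?_ ?_ ?_
    <;> simp

theorem coeff_X_mul_derivative (F : R⟦X⟧) (n : ℕ) :
    coeff n (X * d⁄dX R F) = n * coeff n F := by
  cases n <;> simp [coeff_succ_X_mul, coeff_derivative, mul_comm]

end CommSemiring

section RecurrenceDenominator

variable {R : Type*} [CommRing R]

/-- The denominator `1 - a X + b X²` of the generating function of a sequence satisfying
`x (n + 2) = a * x (n + 1) - b * x n`, as a power series. -/
noncomputable def recDenom (a b : R) : R⟦X⟧ := 1 - C a * X + C b * X ^ 2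

theorem isUnit_recDenom (a b : R) : IsUnit (recDenom a b) := by
  simp [recDenom, isUnit_iff_constantCoeff]

theorem recDenom_mul_mk {a b : R} {x : ℕ → R} (h0 : x 0 = 0)
    (hrec : ∀ n, x (n + 2) = a * x (n + 1) - b * x n) :
    recDenom a b * mk x = C (x 1) * X := by
  ext n
  match n with
  | 0 => simp [h0]
  | 1 => simp [recDenom, sub_mul, add_mul, mul_assoc, pow_two, coeff_succ_X_mul, h0]
  | n + 2 => simp [recDenom, sub_mul, add_mul, mul_assoc, pow_two, coeff_succ_X_mul, hrec]

variable {a b u : R} {G : R⟦X⟧}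

theorem recDenom_mul_X_mul_derivative (hG : recDenom a b * G = C u * X) :
    recDenom a b * (X * d⁄dX R G) = (1 - C b * X ^ 2) * G := by
  have hderiv : recDenom a b * d⁄dX R G + (2 * C b * X - C a) * G = C u := by
    have h := congrArg (d⁄dX R) hG
    simp only [recDenom, Derivation.leibniz, Derivation.leibniz_pow, map_add, map_sub,
      Derivation.map_one_eq_zero, derivative_C, derivative_X, smul_eq_mul, nsmul_eq_mul] at h
    rw [recDenom]
    linear_combination h
  rw [recDenom] at hG hderiv ⊢
  linear_combination X * hderiv - hG

theorem discrim_mul_sq (hG : recDenom a b * G = C u * X) :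
    C (a ^ 2 - 4 * b) * G ^ 2 =
      C u * (C a * (X * d⁄dX R G - G) - C (2 * b) * X * (X * d⁄dX R G + G)) := by
  apply (isUnit_recDenom a b).mul_left_cancel
  have hG' := recDenom_mul_X_mul_derivative hG
  simp only [recDenom, map_sub, map_mul, map_pow, map_ofNat] at hG hG' ⊢
  linear_combination (C a ^ 2 - 4 * C b) * G * hG - C u * (C a - 2 * C b * X) * hG'

theorem discrim_mul_pow_succ (hG : recDenom a b * G = C u * X) (d : ℕ) :
    d • (C (a ^ 2 - 4 * b) * G ^ (d + 1)) =
      C u * (C a * (X * d⁄dX R (G ^ d) - d • G ^ d) -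
        C (2 * b) * X * (X * d⁄dX R (G ^ d) + d • G ^ d)) := by
  cases d with
  | zero => simp
  | succ d =>
    rw [derivative_pow, Nat.add_sub_cancel]
    simp only [nsmul_eq_mul]
    linear_combination ((d + 1 : ℕ) : R⟦X⟧) * G ^ d * discrim_mul_sq hG

theorem discrim_mul_coeff_pow_succ (hG : recDenom a b * G = C u * X) (d n : ℕ) :
    d * (a ^ 2 - 4 * b) * coeff (n + 1) (G ^ (d + 1)) =
      u * (a * (n + 1 - d) * coeff (n + 1) (G ^ d) - 2 * b * (n + d) * coeff n (G ^ d)) := by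
  have h := congrArg (coeff (n + 1)) (discrim_mul_pow_succ hG d)
  rw [map_nsmul, coeff_C_mul, coeff_C_mul, map_sub, mul_assoc, coeff_C_mul, coeff_C_mul,
    coeff_succ_X_mul, map_sub, map_add] at h
  simp only [map_nsmul, coeff_X_mul_derivative] at h
  simp only [nsmul_eq_mul, Nat.cast_add_one] at h
  linear_combination h

end RecurrenceDenominator

section Lucas

variable (p q : ℝ) (k : ℕ)

theorem genU_add_two_mul (m : ℕ) :
    genU p q (m + 2 * k) = genV p q k * genU p q (m + k) - q ^ k * genU p q m := by
  induction k using Nat.twoStepInduction generalizing m with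
  | zero => simp only [genV]; ring_nf
  | one => simp [genU, genV]
  | more k ih₀ ih₁ =>
    calc genU p q (m + 2 * (k + 2))
        = p * genU p q (m + 1 + 2 * (k + 1)) - q * genU p q (m + 2 + 2 * k) := by
          rw [show m + 2 * (k + 2) = m + 2 + 2 * k + 2 by ring, genU]
          ring_nf
      _ = p * (genV p q (k + 1) * genU p q (m + (k + 2)) - q ^ (k + 1) * genU p q (m + 1)) -
            q * (genV p q k * genU p q (m + (k + 2)) - q ^ k * genU p q (m + 2)) := by
          rw [ih₀, ih₁]
          ring_nf
      _ = genV p q (k + 2) * genU p q (m + (k + 2)) - q ^ (k + 2) * genU p q m := by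
          have hU : genU p q (m + 2) = p * genU p q (m + 1) - q * genU p q m := by rw [genU]
          rw [hU, genV]
          ring

theorem genU_mul_add_two (n : ℕ) :
    genU p q (k * (n + 2)) =
      genV p q k * genU p q (k * (n + 1)) - q ^ k * genU p q (k * n) := by
  rw [mul_add_one, ← genU_add_two_mul, mul_add, mul_comm k 2]

theorem sgen_eq_coeff (d n : ℕ) :
    sgen p q k d n = coeff n (mk (fun j ↦ genU p q (k * j)) ^ d) := by
  simp [sgen, ← sum_antidiagonalTuple_prod_coeff]

theorem sgen_one (n : ℕ) : sgen p q k 1 n = genU p q (n * k) := by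
  simp [sgen, mul_comm]

theorem discrim_mul_sgen_succ (d n : ℕ) :
    d * (genV p q k ^ 2 - 4 * q ^ k) * sgen p q k (d + 1) (n + 1) =
      genU p q k * (genV p q k * (n + 1 - d) * sgen p q k d (n + 1) -
        2 * q ^ k * (n + d) * sgen p q k d n) := by
  have hG := recDenom_mul_mk (x := fun j ↦ genU p q (k * j)) rfl (genU_mul_add_two p q k)
  simpa only [sgen_eq_coeff, mul_one] using discrim_mul_coeff_pow_succ hG d n

variable {p q k}

theorem sgen_add_two (hV : genV p q k ^ 2 - 4 * q ^ k ≠ 0) (d n : ℕ) :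
    sgen p q k (d + 2) (n + 1) =
      genU p q k / ((d + 1) * (genV p q k ^ 2 - 4 * q ^ k)) *
        (genV p q k * (n - d) * sgen p q k (d + 1) (n + 1) -
          2 * q ^ k * (n + d + 1) * sgen p q k (d + 1) n) := by
  rw [div_mul_eq_mul_div, eq_div_iff (mul_ne_zero d.cast_add_one_ne_zero hV)]
  have h := discrim_mul_sgen_succ p q k (d + 1) n
  push_cast at h
  linear_combination h

end Lucas

/-- The closed form for `s_4(n; p, q; k)`. -/
theorem stmt_7 (p q : ℝ) (k : ℕ) (hk : 1 ≤ k)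
    (hV : (genV p q k) ^ 2 - 4 * q ^ k ≠ 0) (n : ℕ) (hn : 3 ≤ n) :
    sgen p q k 4 n =
      (genU p q k) ^ 3 / (6 * ((genV p q k) ^ 2 - 4 * q ^ k) ^ 3) *
        ((genV p q k) ^ 3 * ((n : ℝ) - 1) * ((n : ℝ) - 2) * ((n : ℝ) - 3) * genU p q (n * k)
          - 6 * q ^ k * (genV p q k) ^ 2 * ((n : ℝ) - 2) * ((n : ℝ) - 3) * ((n : ℝ) + 1) *
              genU p q ((n - 1) * k)
          + 12 * q ^ (2 * k) * genV p q k * ((n : ℝ) - 3) * ((n : ℝ) ^ 2 + (n : ℝ) - 1) *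
              genU p q ((n - 2) * k)
          - 8 * q ^ (3 * k) * (n : ℝ) * ((n : ℝ) ^ 2 - 4) * genU p q ((n - 3) * k)) := by
  obtain ⟨m, rfl⟩ := Nat.exists_eq_add_of_le' hn
  simp only [sgen_add_two hV, zero_add, sgen_one, Nat.add_sub_cancel,
    show m + 3 - 1 = m + 2 from rfl, show m + 3 - 2 = m + 1 from rfl]
  push_cast
  field_simp
  ring
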